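/- Let n ≥ 2. For every integer m ≥ 1, Ω_{C_{2n}}(m) = Ω_{C_{2n}}(m−1) + n · Ω_{Z_{2n−1}}(m−1) + Ω_{Z_{2n−3}}(m) + Σ_{1 ≤ i < j ≤ n} Ω_{Z_{2(n−j+i)−1}}(m−1) · Ω_{Z_{2(j−i)−1}}(m). -/

import Mathlib

/-- Cover relations of the crown poset `C_{2n}` on `{1,…,2n}`:
`2i−1 ≺ 2i` for `1 ≤ i ≤ n`, `2i+1 ≺ 2i` for `1 ≤ i ≤ n−1`, and `1 ≺ 2n`. -/
def crownCover (n x y : ℕ) : Prop :=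
  Odd x ∧ Even y ∧ (y = x + 1 ∨ x = y + 1 ∨ (x = 1 ∧ y = 2 * n))

/-- The order relation of the crown poset `C_{2n}` (restricted to `{1,…,2n}`). -/
def crownLe (n x y : ℕ) : Prop := x = y ∨ crownCover n x y

/-- The ground set `{1,…,2n}` of the crown poset. -/
def crownGround (n : ℕ) : Finset ℕ := Finset.Icc 1 (2 * n)

/-- Cover relations of the zigzag poset: `2i−1 ≺ 2i` and `2i+1 ≺ 2i`. -/
def zigCover (x y : ℕ) : Prop :=
  Odd x ∧ Even y ∧ (y = x + 1 ∨ x = y + 1)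

/-- The order relation of the zigzag poset `Z_k` (restricted to `{1,…,k}`). -/
def zigLe (x y : ℕ) : Prop := x = y ∨ zigCover x y

/-- The number of order-preserving maps from the poset with ground set `s` and
order relation `le` to the chain `{1,…,m}` (a map is recorded as a function
`ℕ → ℕ` vanishing outside `s`). -/
noncomputable def omegaOn (s : Finset ℕ) (le : ℕ → ℕ → Prop) (m : ℕ) : ℕ :=
  Set.ncard {f : ℕ → ℕ |
    (∀ x, x ∉ s → f x = 0) ∧ (∀ x ∈ s, f x ∈ Finset.Icc 1 m) ∧
    ∀ x ∈ s, ∀ y ∈ s, le x y → f x ≤ f y}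

/-- The order polynomial value `Ω_{C_{2n}}(m)`. -/
noncomputable def omegaCrown (n m : ℕ) : ℕ := omegaOn (crownGround n) (crownLe n) m

/-- The order polynomial value `Ω_{Z_k}(m)`. -/
noncomputable def omegaZig (k m : ℕ) : ℕ := omegaOn (Finset.Icc 1 k) zigLe m

/-!
Classify the order-preserving maps `f` from the crown to `{1,…,m}` by where they reach `m`.

If `f 1 = m`, then `f 2 = f (2n) = m` as well, and `f` is free on the zigzag strictly between `2`
and `2n`. Otherwise, let `i ≤ j` be the extreme indices `k` with `f (2k) = m`; if there are none,
`f` maps to `{1,…,m−1}`. Deleting the maximal elements `2i` and `2j` cuts the crown into two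
zigzags: the one between them, on which `f` is an arbitrary map to `{1,…,m}`, and the
complementary arc through `1`. On that arc `f` stays below `m`, because every element other than
`1` lies below an even element of the arc. The pairs with `i = j` leave a single zigzag and
contribute the term `n · Ω_{Z_{2n−1}}(m−1)`.
-/

section ChainMaps

variable {α β : Type*} {r : α → α → Prop} {r' : β → β → Prop} {s : Finset α} {t : Finset β}
  {b m : ℕ} {f g : α → ℕ}

/-- The order-preserving maps from the poset with ground set `s` and order relation `r` to the
chain `{1,…,m}`, extended by zero outside `s`: the maps counted by `omegaOn`. -/
def chainMaps (s : Finset α) (r : α → α → Prop) (m : ℕ) : Set (α → ℕ) :=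
  {f | (∀ x, x ∉ s → f x = 0) ∧ (∀ x ∈ s, f x ∈ Finset.Icc 1 m) ∧
    ∀ x ∈ s, ∀ y ∈ s, r x y → f x ≤ f y}

theorem omegaOn_eq_ncard_chainMaps (s : Finset ℕ) (le : ℕ → ℕ → Prop) (m : ℕ) :
    omegaOn s le m = (chainMaps s le m).ncard :=
  rfl

theorem le_of_mem_chainMaps (hf : f ∈ chainMaps s r m) {x : α} (hx : x ∈ s) : f x ≤ m :=
  (Finset.mem_Icc.1 (hf.2.1 x hx)).2

theorem mem_chainMaps_iff_of_le (hbm : b ≤ m) :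
    f ∈ chainMaps s r b ↔ f ∈ chainMaps s r m ∧ ∀ x ∈ s, f x ≤ b := by
  simp only [chainMaps, Set.mem_ofPred_eq, Finset.mem_Icc]
  grind

theorem eq_of_mem_chainMaps (hf : f ∈ chainMaps s r m) (hg : g ∈ chainMaps s r b)
    (hfg : Set.EqOn f g s) : f = g := by
  funext x
  by_cases hx : x ∈ s
  · exact hfg hx
  · rw [hf.1 x hx, hg.1 x hx]

theorem indicator_eq_of_mem_chainMaps (hf : f ∈ chainMaps s r m) (hfg : Set.EqOn g f s) :
    (s : Set α).indicator g = f := by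
  rw [Set.indicator_congr hfg]
  exact Set.indicator_eq_self.2 fun x hx ↦ by_contra fun hxs ↦ hx (hf.1 x hxs)

theorem indicator_comp_mem_chainMaps {e : β → α} (hf : f ∈ chainMaps s r m)
    (he : Set.MapsTo e t s) (hr : ∀ x ∈ t, ∀ y ∈ t, r' x y → r (e x) (e y))
    (hb : ∀ x ∈ t, f (e x) ≤ b) :
    (t : Set β).indicator (f ∘ e) ∈ chainMaps t r' b := by
  have heq : ∀ x ∈ t, (t : Set β).indicator (f ∘ e) x = f (e x) :=
    fun x hx ↦ Set.indicator_of_mem (Finset.mem_coe.2 hx) _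
  refine ⟨fun x hx ↦ Set.indicator_of_notMem (by simpa using hx) _, fun x hx ↦ ?_,
    fun x hx y hy hxy ↦ ?_⟩
  · rw [heq x hx]
    exact Finset.mem_Icc.2 ⟨(Finset.mem_Icc.1 (hf.2.1 _ (he hx))).1, hb x hx⟩
  · rw [heq x hx, heq y hy]
    exact hf.2.2 _ (he hx) _ (he hy) (hr x hx y hy hxy)

theorem finite_chainMaps (s : Finset α) (r : α → α → Prop) (m : ℕ) :
    (chainMaps s r m).Finite := by
  refine Set.Finite.of_finite_image (f := fun f (x : s) ↦ f x) ?_ fun f hf g hg hfg ↦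
    eq_of_mem_chainMaps hf hg fun x hx ↦ congrFun hfg ⟨x, hx⟩
  refine (Set.Finite.pi' fun _ : s ↦ Set.finite_Iic m).subset ?_
  rintro _ ⟨f, hf, rfl⟩ x
  exact le_of_mem_chainMaps hf x.2

theorem ncard_chainMaps_empty (r : α → α → Prop) (m : ℕ) : (chainMaps ∅ r m).ncard = 1 := by
  have h : chainMaps ∅ r m = {0} := by
    ext f
    simp [chainMaps, funext_iff]
  rw [h, Set.ncard_singleton]

theorem ncard_chainMaps_congr {e : α → β} {e' : β → α} (he : Set.MapsTo e s t)
    (he' : Set.MapsTo e' t s) (hinv : Set.InvOn e' e s t)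
    (hr : ∀ x ∈ s, ∀ y ∈ s, r x y ↔ r' (e x) (e y)) :
    (chainMaps s r m).ncard = (chainMaps t r' m).ncard := by
  have hr' : ∀ x ∈ t, ∀ y ∈ t, r' x y → r (e' x) (e' y) := fun x hx y hy hxy ↦ by
    rwa [hr _ (he' hx) _ (he' hy), hinv.2 hx, hinv.2 hy]
  refine (Set.InvOn.bijOn (f := fun f ↦ (t : Set β).indicator (f ∘ e'))
    (f' := fun g ↦ (s : Set α).indicator (g ∘ e)) ⟨fun f hf ↦ ?_, fun g hg ↦ ?_⟩
    (fun f hf ↦ ?_) fun g hg ↦ ?_).ncard_eq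
  · refine indicator_eq_of_mem_chainMaps hf fun x hx ↦ ?_
    simp [he hx, hinv.1 hx]
  · refine indicator_eq_of_mem_chainMaps hg fun y hy ↦ ?_
    simp [he' hy, hinv.2 hy]
  · exact indicator_comp_mem_chainMaps hf he' hr' fun x hx ↦ le_of_mem_chainMaps hf (he' hx)
  · exact indicator_comp_mem_chainMaps hg he (fun x hx y hy ↦ (hr x hx y hy).1)
      fun x hx ↦ le_of_mem_chainMaps hg (he hx)

section TopUnion

variable [DecidableEq α] {t u v : Finset α}

theorem piecewise_mem_chainMaps (ht : ∀ x ∈ t, ∀ y ∈ u ∪ v, ¬ r x y)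
    (hr : ∀ x ∈ u, ∀ y ∈ v, ¬ r x y ∧ ¬ r y x)
    (hm : 1 ≤ m) (hbm : b ≤ m) (hf : f ∈ chainMaps u r b) (hg : g ∈ chainMaps v r m) :
    t.piecewise (fun _ ↦ m) (u.piecewise f g) ∈ chainMaps (t ∪ (u ∪ v)) r m := by
  -- Every relation either ends in `t`, where the value is the maximum `m`, or stays in `u` or `v`.
  simp only [chainMaps, Set.mem_ofPred_eq, Finset.mem_union, Finset.mem_Icc,
    Finset.piecewise] at hf hg ht ⊢
  grind

theorem ncard_chainMaps_top_union (htu : Disjoint t u) (htv : Disjoint t v) (huv : Disjoint u v)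
    (ht : ∀ x ∈ t, ∀ y ∈ u ∪ v, ¬ r x y) (hr : ∀ x ∈ u, ∀ y ∈ v, ¬ r x y ∧ ¬ r y x)
    (hm : 1 ≤ m) (hbm : b ≤ m) :
    {f ∈ chainMaps (t ∪ (u ∪ v)) r m | (∀ x ∈ t, f x = m) ∧ ∀ x ∈ u, f x ≤ b}.ncard
      = (chainMaps u r b).ncard * (chainMaps v r m).ncard := by
  have htu' := Finset.disjoint_right.1 htu
  have htv' := Finset.disjoint_right.1 htv
  have huv' := Finset.disjoint_right.1 huv
  have hu : u ⊆ t ∪ (u ∪ v) := by grind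
  have hv : v ⊆ t ∪ (u ∪ v) := by grind
  rw [← Set.ncard_prod]
  refine (Set.InvOn.bijOn
    (f := fun f ↦ ((u : Set α).indicator f, (v : Set α).indicator f))
    (f' := fun p ↦ t.piecewise (fun _ ↦ m) (u.piecewise p.1 p.2))
    ⟨?_, ?_⟩ ?_ ?_).ncard_eq
  · rintro f ⟨hf, hft, -⟩
    funext x
    have := hf.1 x
    have := hft x
    simp only [Finset.piecewise, Set.indicator, Finset.mem_coe]
    grind
  · rintro ⟨f, g⟩ ⟨hf, hg⟩
    refine Prod.ext (indicator_eq_of_mem_chainMaps hf fun x hx ↦ ?_)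
      (indicator_eq_of_mem_chainMaps hg fun x hx ↦ ?_)
    · simp [htu' hx, Finset.mem_coe.1 hx]
    · simp [htv' hx, huv' hx]
  · rintro f ⟨hf, -, hfu⟩
    exact ⟨indicator_comp_mem_chainMaps hf hu (fun x _ y _ ↦ id) hfu,
      indicator_comp_mem_chainMaps hf hv (fun x _ y _ ↦ id)
        fun x hx ↦ le_of_mem_chainMaps hf (hv hx)⟩
  · rintro ⟨f, g⟩ ⟨hf, hg⟩
    refine ⟨piecewise_mem_chainMaps ht hr hm hbm hf hg,
      fun x hx ↦ Finset.piecewise_eq_of_mem _ _ _ hx, fun x hx ↦ ?_⟩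
    simpa [htu' hx, hx] using le_of_mem_chainMaps hf hx

end TopUnion

end ChainMaps

section Crown

variable {n m i j x y : ℕ} {f : ℕ → ℕ}

theorem zigLe_iff_mod_two :
    zigLe x y ↔ x = y ∨ x % 2 = 1 ∧ y % 2 = 0 ∧ (y = x + 1 ∨ x = y + 1) := by
  rw [zigLe, zigCover, Nat.odd_iff, Nat.even_iff]

theorem crownLe_iff_mod_two :
    crownLe n x y ↔
      x = y ∨ x % 2 = 1 ∧ y % 2 = 0 ∧ (y = x + 1 ∨ x = y + 1 ∨ x = 1 ∧ y = 2 * n) := by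
  rw [crownLe, crownCover, Nat.odd_iff, Nat.even_iff]

theorem omegaZig_zero (m : ℕ) : omegaZig 0 m = 1 :=
  ncard_chainMaps_empty zigLe m

theorem mem_crownGround : x ∈ crownGround n ↔ 1 ≤ x ∧ x ≤ 2 * n :=
  Finset.mem_Icc

theorem ncard_chainMaps_Ioo_crownLe (hi : 1 ≤ i) (m : ℕ) :
    (chainMaps (Finset.Ioo (2 * i) (2 * j)) (crownLe n) m).ncard
      = omegaZig (2 * (j - i) - 1) m := by
  symm
  refine ncard_chainMaps_congr (e := fun x ↦ 2 * i + x) (e' := fun y ↦ y - 2 * i)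
    (fun x hx ↦ ?_) (fun y hy ↦ ?_) ⟨fun x _ ↦ ?_, fun y hy ↦ ?_⟩ fun x hx y hy ↦ ?_
  all_goals simp only [Finset.coe_Ioo, Finset.coe_Icc, Set.mem_Ioo, Set.mem_Icc, Finset.mem_Icc,
    zigLe_iff_mod_two, crownLe_iff_mod_two] at *
  all_goals omega

/-- The arc of the crown complementary to the interval from `2i` to `2j`: the elements
`2j+1,…,2n,1,…,2i−1`, which form a zigzag in this cyclic order. -/
def crownOuterArc (n i j : ℕ) : Finset ℕ := {x ∈ crownGround n | x < 2 * i ∨ 2 * j < x}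

theorem mem_crownOuterArc :
    x ∈ crownOuterArc n i j ↔ (1 ≤ x ∧ x ≤ 2 * n) ∧ (x < 2 * i ∨ 2 * j < x) := by
  rw [crownOuterArc, Finset.mem_filter, mem_crownGround]

theorem ncard_chainMaps_crownOuterArc (hi : 1 ≤ i) (hij : i ≤ j) (hj : j ≤ n) (m : ℕ) :
    (chainMaps (crownOuterArc n i j) (crownLe n) m).ncard
      = omegaZig (2 * (n - j + i) - 1) m := by
  symm
  refine ncard_chainMaps_congr
    (e := fun x ↦ if 2 * j + x ≤ 2 * n then 2 * j + x else 2 * j + x - 2 * n)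
    (e' := fun y ↦ if 2 * j < y then y - 2 * j else y + 2 * n - 2 * j)
    (fun x hx ↦ ?_) (fun y hy ↦ ?_) ⟨fun x hx ↦ ?_, fun y hy ↦ ?_⟩ fun x hx y hy ↦ ?_
  all_goals simp only [Finset.coe_Icc, Set.mem_Icc, Finset.mem_Icc, Finset.mem_coe,
    mem_crownOuterArc, zigLe_iff_mod_two, crownLe_iff_mod_two] at *
  all_goals split_ifs <;> omega

theorem crownGround_eq_union (hi : 1 ≤ i) (hij : i ≤ j) (hj : j ≤ n) :
    crownGround n = {2 * i, 2 * j} ∪ (crownOuterArc n i j ∪ Finset.Ioo (2 * i) (2 * j)) := by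
  ext x
  simp only [Finset.mem_union, Finset.mem_insert, Finset.mem_singleton, Finset.mem_Ioo,
    mem_crownOuterArc, mem_crownGround]
  omega

/-- The order-preserving maps from the crown poset `C_{2n}` to the chain `{1,…,m}`. -/
abbrev crownMaps (n m : ℕ) : Set (ℕ → ℕ) := chainMaps (crownGround n) (crownLe n) m

/-- The indices `k` of the maximal elements `2k` of the crown poset `C_{2n}` at which `f` takes
the value `m`. -/
def topIndices (n m : ℕ) (f : ℕ → ℕ) : Finset ℕ := {k ∈ Finset.Icc 1 n | f (2 * k) = m}

theorem mem_topIndices {k : ℕ} :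
    k ∈ topIndices n m f ↔ (1 ≤ k ∧ k ≤ n) ∧ f (2 * k) = m := by
  rw [topIndices, Finset.mem_filter, Finset.mem_Icc]

/-- The order-preserving maps from `C_{2n}` to `{1,…,m}` that stay below `m` at `1` and whose
top indices have least element `i` and greatest element `j`. -/
def crownSpan (n m i j : ℕ) : Set (ℕ → ℕ) :=
  {f ∈ crownMaps n m | f 1 < m ∧
    IsLeast (topIndices n m f : Set ℕ) i ∧ IsGreatest (topIndices n m f : Set ℕ) j}

theorem lt_of_crownLe_of_notMem_topIndices {k : ℕ} (hf : f ∈ crownMaps n m)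
    (hx : x ∈ crownGround n) (hk : 2 * k ∈ crownGround n) (hxk : crownLe n x (2 * k))
    (hkm : k ∉ topIndices n m f) : f x < m := by
  refine (hf.2.2 x hx _ hk hxk).trans_lt ((le_of_mem_chainMaps hf hk).lt_of_ne fun h ↦ hkm ?_)
  rw [mem_crownGround] at hk
  exact mem_topIndices.2 ⟨by lia, h⟩

theorem lt_of_topIndices_eq_empty (hf : f ∈ crownMaps n m) (htop : topIndices n m f = ∅)
    (hx : x ∈ crownGround n) : f x < m := by
  have hx' := mem_crownGround.1 hx
  refine lt_of_crownLe_of_notMem_topIndices (k := (x + 1) / 2) hf hx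
    (mem_crownGround.2 (by lia)) (crownLe_iff_mod_two.2 (by lia)) ?_
  rw [htop]
  exact Finset.notMem_empty _

theorem exists_crownLe_even_mem_crownOuterArc (hx : x ∈ crownOuterArc n i j) (hx1 : x ≠ 1) :
    ∃ k, 2 * k ∈ crownOuterArc n i j ∧ crownLe n x (2 * k) := by
  rw [mem_crownOuterArc] at hx
  refine ⟨if x < 2 * i then x / 2 else (x + 1) / 2, ?_⟩
  rw [mem_crownOuterArc, crownLe_iff_mod_two]
  split_ifs <;> lia

theorem lt_of_mem_crownSpan_of_mem_crownOuterArc (hf : f ∈ crownSpan n m i j)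
    (hx : x ∈ crownOuterArc n i j) : f x < m := by
  obtain ⟨hf, h1, hleast, hgreatest⟩ := hf
  rcases eq_or_ne x 1 with rfl | hx1
  · exact h1
  obtain ⟨k, hk, hxk⟩ := exists_crownLe_even_mem_crownOuterArc hx hx1
  refine lt_of_crownLe_of_notMem_topIndices hf (Finset.mem_filter.1 hx).1
    (Finset.mem_filter.1 hk).1 hxk fun hkm ↦ ?_
  have hik := hleast.2 hkm
  have hkj := hgreatest.2 hkm
  rw [mem_crownOuterArc] at hk
  lia

theorem crownSpan_eq (hi : 1 ≤ i) (hij : i ≤ j) (hj : j ≤ n) (hm : 1 ≤ m) :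
    crownSpan n m i j = {f ∈ crownMaps n m | (∀ x ∈ ({2 * i, 2 * j} : Finset ℕ), f x = m) ∧
      ∀ x ∈ crownOuterArc n i j, f x ≤ m - 1} := by
  ext f
  refine and_congr_right fun hf ↦ ⟨?_, ?_⟩
  · rintro ⟨h1, hleast, hgreatest⟩
    refine ⟨?_, fun x hx ↦ Nat.le_sub_one_of_lt
      (lt_of_mem_crownSpan_of_mem_crownOuterArc ⟨hf, h1, hleast, hgreatest⟩ hx)⟩
    simp [(mem_topIndices.1 hleast.1).2, (mem_topIndices.1 hgreatest.1).2]
  · rintro ⟨htop, houter⟩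
    have hlt : ∀ x ∈ crownOuterArc n i j, f x < m := fun x hx ↦ by have := houter x hx; lia
    have hmem : ∀ k ∈ topIndices n m f, i ≤ k ∧ k ≤ j := fun k hk ↦ by
      rw [mem_topIndices] at hk
      by_contra hkij
      exact (hlt (2 * k) (mem_crownOuterArc.2 (by lia))).ne hk.2
    exact ⟨hlt 1 (mem_crownOuterArc.2 (by lia)),
      ⟨mem_topIndices.2 ⟨by lia, htop _ (by simp)⟩, fun k hk ↦ (hmem k hk).1⟩,
      mem_topIndices.2 ⟨by lia, htop _ (by simp)⟩, fun k hk ↦ (hmem k hk).2⟩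

theorem ncard_crownSpan (hi : 1 ≤ i) (hij : i ≤ j) (hj : j ≤ n) (hm : 1 ≤ m) :
    (crownSpan n m i j).ncard
      = omegaZig (2 * (n - j + i) - 1) (m - 1) * omegaZig (2 * (j - i) - 1) m := by
  rw [crownSpan_eq hi hij hj hm, crownMaps, crownGround_eq_union hi hij hj,
    ncard_chainMaps_top_union _ _ _ _ _ hm (Nat.sub_le m 1),
    ncard_chainMaps_crownOuterArc hi hij hj, ncard_chainMaps_Ioo_crownLe hi]
  all_goals simp only [Finset.disjoint_left, Finset.mem_union, Finset.mem_insert,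
    Finset.mem_singleton, Finset.mem_Ioo, mem_crownOuterArc, crownLe_iff_mod_two]
  all_goals lia

theorem crownGround_eq_insert_union_Ioo (hn : 1 ≤ n) :
    crownGround n = {1, 2, 2 * n} ∪ (∅ ∪ Finset.Ioo 2 (2 * n)) := by
  ext x
  simp only [Finset.mem_union, Finset.mem_insert, Finset.mem_singleton, Finset.mem_Ioo,
    mem_crownGround, Finset.notMem_empty]
  lia

theorem setOf_crownMaps_one_eq (hn : 1 ≤ n) :
    {f ∈ crownMaps n m | f 1 = m} =
      {f ∈ crownMaps n m | (∀ x ∈ ({1, 2, 2 * n} : Finset ℕ), f x = m) ∧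
        ∀ x ∈ (∅ : Finset ℕ), f x ≤ m} := by
  ext f
  refine and_congr_right fun hf ↦ ⟨fun h1 ↦ ⟨fun x hx ↦ ?_, by simp⟩, fun h ↦ h.1 1 (by simp)⟩
  have hxn : x ∈ crownGround n := by
    rw [crownGround_eq_insert_union_Ioo hn]
    exact Finset.mem_union_left _ hx
  simp only [Finset.mem_insert, Finset.mem_singleton] at hx
  refine (le_of_mem_chainMaps hf hxn).antisymm ?_
  exact h1.ge.trans
    (hf.2.2 1 (mem_crownGround.2 (by lia)) x hxn (crownLe_iff_mod_two.2 (by lia)))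

theorem ncard_crownMaps_one_eq (hn : 1 ≤ n) (hm : 1 ≤ m) :
    {f ∈ crownMaps n m | f 1 = m}.ncard = omegaZig (2 * n - 3) m := by
  rw [setOf_crownMaps_one_eq hn, crownMaps, crownGround_eq_insert_union_Ioo hn,
    ncard_chainMaps_top_union _ _ _ _ _ hm le_rfl, ncard_chainMaps_empty, one_mul]
  · exact (ncard_chainMaps_Ioo_crownLe le_rfl m).trans (by congr 1; lia)
  all_goals simp only [Finset.disjoint_left, Finset.mem_union, Finset.mem_insert,
    Finset.mem_singleton, Finset.mem_Ioo, Finset.notMem_empty, crownLe_iff_mod_two]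
  all_goals lia

/-- The pairs `(i, j)` with `1 ≤ i ≤ j ≤ n`, which index the sets `crownSpan n m i j`. -/
def spanIndices (n : ℕ) : Finset (Σ _ : ℕ, ℕ) := (Finset.Icc 1 n).sigma fun i ↦ Finset.Icc i n

theorem setOf_crownMaps_one_lt (hn : 1 ≤ n) :
    {f ∈ crownMaps n m | f 1 < m} =
      crownMaps n (m - 1) ∪ ⋃ p ∈ spanIndices n, crownSpan n m p.1 p.2 := by
  ext f
  simp only [Set.mem_union, Set.mem_iUnion, exists_prop, spanIndices, Finset.mem_sigma,
    Finset.mem_Icc]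
  constructor
  · rintro ⟨hf, h1⟩
    rcases (topIndices n m f).eq_empty_or_nonempty with htop | htop
    · exact .inl ((mem_chainMaps_iff_of_le (Nat.sub_le m 1)).2
        ⟨hf, fun x hx ↦ Nat.le_sub_one_of_lt (lt_of_topIndices_eq_empty hf htop hx)⟩)
    · have hmin := mem_topIndices.1 (Finset.min'_mem _ htop)
      have hmax := mem_topIndices.1 (Finset.max'_mem _ htop)
      exact .inr ⟨⟨_, _⟩, ⟨hmin.1, Finset.min'_le_max' _ htop, hmax.1.2⟩, hf, h1,
        Finset.isLeast_min' _ htop, Finset.isGreatest_max' _ htop⟩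
  · rintro (hf | ⟨p, -, hf, h1, -⟩)
    · have h1 := Finset.mem_Icc.1 (hf.2.1 1 (mem_crownGround.2 (by lia)))
      exact ⟨((mem_chainMaps_iff_of_le (Nat.sub_le m 1)).1 hf).1, by lia⟩
    · exact ⟨hf, h1⟩

theorem disjoint_crownMaps_crownSpan (n m i j : ℕ) :
    Disjoint (crownMaps n (m - 1)) (crownSpan n m i j) := by
  refine Set.disjoint_left.2 fun f hf hspan ↦ ?_
  have hi := mem_topIndices.1 hspan.2.2.1.1
  have := le_of_mem_chainMaps (x := 2 * i) hf (mem_crownGround.2 (by lia))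
  have := hspan.2.1
  lia

theorem pairwiseDisjoint_crownSpan (n m : ℕ) (S : Set (Σ _ : ℕ, ℕ)) :
    S.PairwiseDisjoint fun p ↦ crownSpan n m p.1 p.2 := by
  rintro ⟨i, j⟩ - ⟨i', j'⟩ - hne
  refine Set.disjoint_left.2 fun f hf hf' ↦ hne ?_
  obtain rfl := hf.2.2.1.unique hf'.2.2.1
  obtain rfl := hf.2.2.2.unique hf'.2.2.2
  rfl

theorem ncard_crownMaps_one_lt (hn : 1 ≤ n) (m : ℕ) :
    {f ∈ crownMaps n m | f 1 < m}.ncard = omegaCrown n (m - 1)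
      + ∑ i ∈ Finset.Icc 1 n, ∑ j ∈ Finset.Icc i n, (crownSpan n m i j).ncard := by
  have hfin : ∀ p ∈ (spanIndices n : Set (Σ _ : ℕ, ℕ)), (crownSpan n m p.1 p.2).Finite :=
    fun _ _ ↦ (finite_chainMaps _ _ _).subset fun _ hf ↦ hf.1
  have hdisj : Disjoint (crownMaps n (m - 1)) (⋃ p ∈ spanIndices n, crownSpan n m p.1 p.2) := by
    simp only [Set.disjoint_iUnion_right]
    exact fun _ _ ↦ disjoint_crownMaps_crownSpan n m _ _
  rw [setOf_crownMaps_one_lt hn, Set.ncard_union_eq hdisj (finite_chainMaps _ _ _)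
    ((spanIndices n).finite_toSet.biUnion hfin)]
  congr 1
  calc (⋃ p ∈ (spanIndices n : Set (Σ _ : ℕ, ℕ)), crownSpan n m p.1 p.2).ncard
    _ = ∑ p ∈ spanIndices n, (crownSpan n m p.1 p.2).ncard := by
      rw [(spanIndices n).finite_toSet.ncard_biUnion hfin (pairwiseDisjoint_crownSpan n m _),
        finsum_mem_coe_finset]
    _ = ∑ i ∈ Finset.Icc 1 n, ∑ j ∈ Finset.Icc i n, (crownSpan n m i j).ncard :=
      Finset.sum_sigma ..

theorem omegaCrown_eq_ncard_add_ncard (hn : 1 ≤ n) (m : ℕ) :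
    omegaCrown n m =
      {f ∈ crownMaps n m | f 1 = m}.ncard + {f ∈ crownMaps n m | f 1 < m}.ncard := by
  rw [omegaCrown, omegaOn_eq_ncard_chainMaps, ← Set.ncard_union_eq _
    ((finite_chainMaps _ _ _).sep _) ((finite_chainMaps _ _ _).sep _)]
  · congr 1
    ext f
    refine ⟨fun hf ↦ ?_, fun hf ↦ hf.elim And.left And.left⟩
    have h1 : f 1 ≤ m := le_of_mem_chainMaps hf (mem_crownGround.2 (by lia))
    exact h1.eq_or_lt.imp (⟨hf, ·⟩) (⟨hf, ·⟩)
  · exact Set.disjoint_left.2 fun f hf hf' ↦ hf'.2.ne hf.2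

theorem sum_ncard_crownSpan (hi : 1 ≤ i) (hin : i ≤ n) (hm : 1 ≤ m) :
    ∑ j ∈ Finset.Icc i n, (crownSpan n m i j).ncard = omegaZig (2 * n - 1) (m - 1)
      + ∑ j ∈ Finset.Icc (i + 1) n,
          omegaZig (2 * (n - j + i) - 1) (m - 1) * omegaZig (2 * (j - i) - 1) m := by
  have hspan : ∀ j ∈ Finset.Icc i n, (crownSpan n m i j).ncard = _ := fun j hj ↦
    ncard_crownSpan hi (Finset.mem_Icc.1 hj).1 (Finset.mem_Icc.1 hj).2 hm
  rw [Finset.sum_congr rfl hspan, ← Finset.add_sum_Ioc_eq_sum_Icc hin,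
    ← Finset.Icc_add_one_left_eq_Ioc, Nat.sub_add_cancel hin, Nat.sub_self, omegaZig_zero, mul_one]

end Crown

/-- Theorem 4.3, Equation (1): the recursion for the order polynomial of the
crown poset in terms of order polynomials of zigzags, evaluated at `m ≥ 1`. -/
theorem crown_order_polynomial_recursion (n : ℕ) (hn : 2 ≤ n) (m : ℕ) (hm : 1 ≤ m) :
    omegaCrown n m
      = omegaCrown n (m - 1) + n * omegaZig (2 * n - 1) (m - 1) + omegaZig (2 * n - 3) m
        + ∑ i ∈ Finset.Icc 1 n, ∑ j ∈ Finset.Icc (i + 1) n,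
            omegaZig (2 * (n - j + i) - 1) (m - 1) * omegaZig (2 * (j - i) - 1) m := by
  have hn1 : 1 ≤ n := by lia
  have hspan : ∀ i ∈ Finset.Icc 1 n, ∑ j ∈ Finset.Icc i n, (crownSpan n m i j).ncard = _ :=
    fun i hi ↦ sum_ncard_crownSpan (Finset.mem_Icc.1 hi).1 (Finset.mem_Icc.1 hi).2 hm
  rw [omegaCrown_eq_ncard_add_ncard hn1 m, ncard_crownMaps_one_eq hn1 hm,
    ncard_crownMaps_one_lt hn1 m, Finset.sum_congr rfl hspan, Finset.sum_add_distrib,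
    Finset.sum_const, Nat.card_Icc, Nat.add_sub_cancel, smul_eq_mul]
  ring
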